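/- Exponential spatial decay (Theorem 'Milne theorem 2'): There exist ε₀ ∈ (0,1), K₀ ∈ (0, K] and C > 0, depending only on R₁, R₂, n, K and M, such that for every ε ∈ (0, ε₀] and every classical solution f of the ε-Milne problem with geometric correction whose data h, S satisfy the data bounds, one has ‖e^{K₀η}(f − f_L)‖_{L²} + ‖e^{K₀η}(f − f_L)‖_{L∞} ≤ C. -/

import Mathlib

noncomputable section

open Real Set MeasureTheory

namespace MilneStmt

/-- The boundary-layer thickness `L = ε^(-n)`. -/
def layerL (ε n : ℝ) : ℝ := ε ^ (-n)

/-- The geometric force `F(η,ψ)`. -/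
def force (R₁ R₂ ε η ψ : ℝ) : ℝ :=
  -ε * (Real.sin ψ ^ 2 / (R₁ - ε * η) + Real.cos ψ ^ 2 / (R₂ - ε * η))

/-- The domain `D = [0,L] × [-π/2, π/2] × [-π, π]` of the variables `(η, φ, ψ)`. -/
def milneDomain (L : ℝ) : Set (ℝ × ℝ × ℝ) :=
  Icc (0 : ℝ) L ×ˢ Icc (-(π / 2)) (π / 2) ×ˢ Icc (-π) π

/-- The in-flow set `{(φ,ψ) : sin φ > 0, ψ ∈ [-π,π]}` (with `φ` in the velocity range). -/
def inflowSet : Set (ℝ × ℝ) :=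
  {q | 0 < Real.sin q.1 ∧ q.1 ∈ Icc (-(π / 2)) (π / 2) ∧ q.2 ∈ Icc (-π) π}

/-- The angular average `f̄(η)`. -/
def angAvg (f : ℝ × ℝ × ℝ → ℝ) (η : ℝ) : ℝ :=
  (1 / (4 * π)) * ∫ ψ in (-π)..π, ∫ φ in (-(π / 2))..(π / 2), f (η, φ, ψ) * Real.cos φ

/-- Partial derivative in `η`. -/
def dEta (g : ℝ × ℝ × ℝ → ℝ) (p : ℝ × ℝ × ℝ) : ℝ :=
  deriv (fun t => g (t, p.2.1, p.2.2)) p.1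

/-- Partial derivative in `φ`. -/
def dPhi (g : ℝ × ℝ × ℝ → ℝ) (p : ℝ × ℝ × ℝ) : ℝ :=
  deriv (fun t => g (p.1, t, p.2.2)) p.2.1

/-- Partial derivative in `ψ`. -/
def dPsi (g : ℝ × ℝ × ℝ → ℝ) (p : ℝ × ℝ × ℝ) : ℝ :=
  deriv (fun t => g (p.1, p.2.1, t)) p.2.2

/-- A classical solution of the ε-Milne problem with geometric correction,
with in-flow data `h` and source `S`. -/
structure IsMilneSolution (R₁ R₂ ε n : ℝ) (h : ℝ → ℝ → ℝ) (S : ℝ × ℝ × ℝ → ℝ)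
    (f : ℝ × ℝ × ℝ → ℝ) : Prop where
  smooth : ContDiffOn ℝ 1 f (milneDomain (layerL ε n))
  eqn : ∀ p ∈ interior (milneDomain (layerL ε n)),
    Real.sin p.2.1 * dEta f p + force R₁ R₂ ε p.1 p.2.2 * Real.cos p.2.1 * dPhi f p
      + f p - angAvg f p.1 = S p
  inflow : ∀ q ∈ inflowSet, f (0, q.1, q.2) = h q.1 q.2
  reflect : ∀ φ ψ : ℝ, f (layerL ε n, φ, ψ) = f (layerL ε n, -φ, ψ)

/-- The weighted `L²` norm on `D`. -/
def l2Norm (L : ℝ) (g : ℝ × ℝ × ℝ → ℝ) : ℝ :=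
  Real.sqrt (∫ η in (0 : ℝ)..L, ∫ ψ in (-π)..π, ∫ φ in (-(π / 2))..(π / 2),
    g (η, φ, ψ) ^ 2 * Real.cos φ)

/-- The `L^∞` norm (sup over `D`). -/
def linfNorm (L : ℝ) (g : ℝ × ℝ × ℝ → ℝ) : ℝ :=
  ⨆ p ∈ milneDomain L, |g p|

/-- The `L^∞` norm over the in-flow boundary. -/
def inflowLinf (g : ℝ → ℝ → ℝ) : ℝ :=
  ⨆ q ∈ inflowSet, |g q.1 q.2|

/-- The limit value `f_L = (3/(4π)) ∫∫ f(L,φ,ψ) sin²φ cos φ dφ dψ`. -/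
def limitValue (L : ℝ) (f : ℝ × ℝ × ℝ → ℝ) : ℝ :=
  (3 / (4 * π)) * ∫ ψ in (-π)..π, ∫ φ in (-(π / 2))..(π / 2),
    f (L, φ, ψ) * Real.sin φ ^ 2 * Real.cos φ

/-- The data bounds with constants `K` and `M` for in-flow data `h` and source `S`. -/
structure DataBounds (K M L : ℝ) (h : ℝ → ℝ → ℝ) (S : ℝ × ℝ × ℝ → ℝ) : Prop where
  hSmooth : ContDiffOn ℝ 1 (fun q : ℝ × ℝ => h q.1 q.2) inflowSet
  hBound : ∀ q ∈ inflowSet,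
    |h q.1 q.2| + |deriv (fun t => h t q.2) q.1| + |deriv (fun t => h q.1 t) q.2| ≤ M
  sSmooth : ContDiffOn ℝ 1 S (milneDomain L)
  sBound : ∀ p ∈ milneDomain L,
    Real.exp (K * p.1) * (|S p| + |dEta S p| + |dPhi S p| + |dPsi S p|) ≤ M

/-! ### Averages -/

/-- Angular average of a function of `(φ,ψ)`. -/
def E (u : ℝ → ℝ → ℝ) : ℝ :=
  (1 / (4 * π)) * ∫ ψ in (-π)..π, ∫ φ in (-(π / 2))..(π / 2), u φ ψ * Real.cos φ

lemma neg_half_pi_le : -(π / 2) ≤ π / 2 := by linarith [Real.pi_pos]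
lemma neg_pi_le : -π ≤ π := by linarith [Real.pi_pos]

lemma cont_inner {u : ℝ → ℝ → ℝ} (hu : Continuous fun q : ℝ × ℝ => u q.1 q.2) :
    Continuous fun ψ => ∫ φ in (-(π / 2))..(π / 2), u φ ψ * Real.cos φ := by
  apply intervalIntegral.continuous_parametric_intervalIntegral_of_continuous'
  have : Continuous fun q : ℝ × ℝ => u q.2 q.1 := hu.comp (continuous_snd.prodMk continuous_fst)
  simp only [Function.uncurry_def]
  fun_prop

lemma cont_slice {u : ℝ → ℝ → ℝ} (hu : Continuous fun q : ℝ × ℝ => u q.1 q.2) (ψ : ℝ) :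
    Continuous fun φ => u φ ψ := hu.comp (continuous_id.prodMk continuous_const)

lemma E_congr_inner {u v : ℝ → ℝ → ℝ} (h : ∀ ψ ∈ Icc (-π) π,
    ∫ φ in (-(π / 2))..(π / 2), u φ ψ * Real.cos φ
      = ∫ φ in (-(π / 2))..(π / 2), v φ ψ * Real.cos φ) : E u = E v := by
  unfold E
  congr 1
  apply intervalIntegral.integral_congr
  intro ψ hψ
  rw [uIcc_of_le neg_pi_le] at hψ
  exact h ψ hψ

lemma E_congr {u v : ℝ → ℝ → ℝ}
    (h : ∀ φ ∈ Icc (-(π / 2)) (π / 2), ∀ ψ ∈ Icc (-π) π, u φ ψ = v φ ψ) : E u = E v := by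
  apply E_congr_inner
  intro ψ hψ
  apply intervalIntegral.integral_congr
  intro φ hφ
  rw [uIcc_of_le neg_half_pi_le] at hφ
  simp only [h φ hφ ψ hψ]

lemma E_add {u v : ℝ → ℝ → ℝ} (hu : Continuous fun q : ℝ × ℝ => u q.1 q.2)
    (hv : Continuous fun q : ℝ × ℝ => v q.1 q.2) :
    E (fun φ ψ => u φ ψ + v φ ψ) = E u + E v := by
  unfold E
  rw [← mul_add, ← intervalIntegral.integral_add ((cont_inner hu).intervalIntegrable _ _)
    ((cont_inner hv).intervalIntegrable _ _)]
  congr 1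
  apply intervalIntegral.integral_congr
  intro ψ _
  have h1 := cont_slice hu ψ
  have h2 := cont_slice hv ψ
  simp only [add_mul]
  rw [intervalIntegral.integral_add]
  · exact (h1.mul Real.continuous_cos).intervalIntegrable _ _
  · exact (h2.mul Real.continuous_cos).intervalIntegrable _ _

lemma E_const_mul (c : ℝ) (u : ℝ → ℝ → ℝ) :
    E (fun φ ψ => c * u φ ψ) = c * E u := by
  unfold E
  simp only [mul_assoc, intervalIntegral.integral_const_mul]
  ring

lemma E_neg (u : ℝ → ℝ → ℝ) : E (fun φ ψ => - u φ ψ) = - E u := by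
  have := E_const_mul (-1) u
  simpa using this

lemma E_sub {u v : ℝ → ℝ → ℝ} (hu : Continuous fun q : ℝ × ℝ => u q.1 q.2)
    (hv : Continuous fun q : ℝ × ℝ => v q.1 q.2) :
    E (fun φ ψ => u φ ψ - v φ ψ) = E u - E v := by
  have := E_add (v := fun φ ψ => - v φ ψ) hu hv.neg
  rw [E_neg] at this
  simpa [sub_eq_add_neg] using this

lemma E_mono {u v : ℝ → ℝ → ℝ} (hu : Continuous fun q : ℝ × ℝ => u q.1 q.2)
    (hv : Continuous fun q : ℝ × ℝ => v q.1 q.2)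
    (h : ∀ φ ∈ Icc (-(π / 2)) (π / 2), ∀ ψ ∈ Icc (-π) π, u φ ψ ≤ v φ ψ) : E u ≤ E v := by
  unfold E
  have hp := Real.pi_pos
  apply mul_le_mul_of_nonneg_left _ (by positivity)
  apply intervalIntegral.integral_mono_on neg_pi_le ((cont_inner hu).intervalIntegrable _ _)
    ((cont_inner hv).intervalIntegrable _ _)
  intro ψ hψ
  apply intervalIntegral.integral_mono_on neg_half_pi_le
    (((cont_slice hu ψ).mul Real.continuous_cos).intervalIntegrable _ _)
    (((cont_slice hv ψ).mul Real.continuous_cos).intervalIntegrable _ _)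
  intro φ hφ
  exact mul_le_mul_of_nonneg_right (h φ hφ ψ hψ) (Real.cos_nonneg_of_mem_Icc hφ)

lemma E_abs_le {u v : ℝ → ℝ → ℝ} (hu : Continuous fun q : ℝ × ℝ => u q.1 q.2)
    (hv : Continuous fun q : ℝ × ℝ => v q.1 q.2)
    (h : ∀ φ ∈ Icc (-(π / 2)) (π / 2), ∀ ψ ∈ Icc (-π) π, |u φ ψ| ≤ v φ ψ) : |E u| ≤ E v := by
  rw [abs_le]
  constructor
  · rw [← E_neg]
    exact E_mono hv.neg hu fun φ hφ ψ hψ => (abs_le.1 (h φ hφ ψ hψ)).1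
  · exact E_mono hu hv fun φ hφ ψ hψ => (abs_le.1 (h φ hφ ψ hψ)).2

lemma E_phi (w : ℝ → ℝ) :
    E (fun φ _ => w φ) = (1 / 2) * ∫ φ in (-(π / 2))..(π / 2), w φ * Real.cos φ := by
  unfold E
  have hp := Real.pi_pos.ne'
  simp only [intervalIntegral.integral_const, smul_eq_mul]
  field_simp
  ring

lemma int_sin_pow (a b : ℝ) (k : ℕ) :
    ∫ φ in a..b, Real.sin φ ^ k * Real.cos φ
      = (Real.sin b ^ (k + 1) - Real.sin a ^ (k + 1)) / (k + 1) := by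
  rw [intervalIntegral.integral_eq_sub_of_hasDerivAt
    (f := fun φ => Real.sin φ ^ (k + 1) / (k + 1))]
  · ring
  · intro x _
    have := ((Real.hasDerivAt_sin x).pow (k + 1)).div_const ((k : ℝ) + 1)
    refine this.congr_deriv ?_
    have : (k : ℝ) + 1 ≠ 0 := by positivity
    push_cast
    rw [div_eq_iff this]
    ring
  · exact (by fun_prop : Continuous fun φ => Real.sin φ ^ k * Real.cos φ).intervalIntegrable _ _

lemma E_sin_pow (k : ℕ) : E (fun φ _ => Real.sin φ ^ k) = (1 - (-1) ^ (k + 1)) / (2 * (k + 1)) := by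
  rw [E_phi, int_sin_pow]
  simp [Real.sin_neg]
  field_simp

lemma E_const (c : ℝ) : E (fun _ _ => c) = c := by
  have := E_const_mul c (fun φ _ => Real.sin φ ^ 0)
  rw [E_sin_pow] at this
  norm_num at this
  exact this

lemma E_sin : E (fun φ _ => Real.sin φ) = 0 := by
  have := E_sin_pow 1
  norm_num at this
  exact this

lemma E_sin2 : E (fun φ _ => Real.sin φ ^ 2) = 1 / 3 := by
  rw [E_sin_pow]; norm_num

lemma E_cos2 : E (fun φ _ => Real.cos φ ^ 2) = 2 / 3 := by
  have : E (fun φ _ => Real.cos φ ^ 2) = E (fun φ _ => 1 - Real.sin φ ^ 2) := by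
    simp only [Real.cos_sq']
  rw [this, E_sub (by fun_prop) (by fun_prop), E_const, E_sin2]; norm_num

/-! ### Differentiation under the integral sign -/

lemma deriv_int_1 {L a b : ℝ} {u u' : ℝ → ℝ → ℝ}
    (hu : Continuous fun q : ℝ × ℝ => u q.1 q.2) (hu' : Continuous fun q : ℝ × ℝ => u' q.1 q.2)
    (hd : ∀ η ∈ Ioo 0 L, ∀ x, HasDerivAt (fun t => u t x) (u' η x) η)
    {η : ℝ} (hη : η ∈ Ioo 0 L) :
    HasDerivAt (fun t => ∫ x in a..b, u t x) (∫ x in a..b, u' η x) η := by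
  obtain ⟨B, hB⟩ := (isCompact_Icc.prod (isCompact_uIcc (a := a) (b := b)) :
    IsCompact (Icc 0 L ×ˢ uIcc a b)).exists_bound_of_continuousOn hu'.continuousOn
  have hs : ∀ t, Continuous fun x => u t x := fun t => hu.comp (continuous_const.prodMk continuous_id)
  have hs' : ∀ t, Continuous fun x => u' t x := fun t => hu'.comp (continuous_const.prodMk continuous_id)
  refine (intervalIntegral.hasDerivAt_integral_of_dominated_loc_of_deriv_le
    (F := u) (F' := u') (bound := fun _ => B) (s := Ioo 0 L) (isOpen_Ioo.mem_nhds hη)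
    (Filter.Eventually.of_forall fun t => (hs t).aestronglyMeasurable)
    ((hs η).intervalIntegrable _ _) (hs' η).aestronglyMeasurable ?_
    intervalIntegrable_const ?_).2
  · refine Filter.Eventually.of_forall fun x hx t ht => ?_
    exact hB (t, x) ⟨Ioo_subset_Icc_self ht, uIoc_subset_uIcc hx⟩
  · exact Filter.Eventually.of_forall fun x _ t ht => hd t ht x

lemma deriv_E {L : ℝ} {u u' : ℝ → ℝ → ℝ → ℝ}
    (hu : Continuous fun q : ℝ × ℝ × ℝ => u q.1 q.2.1 q.2.2)
    (hu' : Continuous fun q : ℝ × ℝ × ℝ => u' q.1 q.2.1 q.2.2)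
    (hd : ∀ η ∈ Ioo 0 L, ∀ φ ψ, HasDerivAt (fun t => u t φ ψ) (u' η φ ψ) η)
    {η : ℝ} (hη : η ∈ Ioo 0 L) :
    HasDerivAt (fun t => E (u t)) (E (u' η)) η := by
  unfold E
  apply HasDerivAt.const_mul
  have key : ∀ v : ℝ → ℝ → ℝ → ℝ, (Continuous fun q : ℝ × ℝ × ℝ => v q.1 q.2.1 q.2.2) →
      Continuous fun q : ℝ × ℝ => ∫ φ in (-(π / 2))..(π / 2), v q.1 φ q.2 * Real.cos φ := by
    intro v hv
    apply intervalIntegral.continuous_parametric_intervalIntegral_of_continuous'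
    have : Continuous fun q : (ℝ × ℝ) × ℝ => v q.1.1 q.2 q.1.2 :=
      hv.comp (by fun_prop : Continuous fun q : (ℝ × ℝ) × ℝ => (q.1.1, q.2, q.1.2))
    simp only [Function.uncurry_def]
    fun_prop
  refine deriv_int_1 (L := L)
    (u := fun t ψ => ∫ φ in (-(π / 2))..(π / 2), u t φ ψ * Real.cos φ)
    (u' := fun t ψ => ∫ φ in (-(π / 2))..(π / 2), u' t φ ψ * Real.cos φ)
    (key u hu) (key u' hu') ?_ hη
  intro t ht ψ
  have k2 : ∀ v : ℝ → ℝ → ℝ → ℝ, (Continuous fun q : ℝ × ℝ × ℝ => v q.1 q.2.1 q.2.2) →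
      Continuous fun q : ℝ × ℝ => v q.1 q.2 ψ * Real.cos q.2 := by
    intro v hv
    have : Continuous fun q : ℝ × ℝ => v q.1 q.2 ψ :=
      hv.comp (by fun_prop : Continuous fun q : ℝ × ℝ => (q.1, q.2, ψ))
    fun_prop
  exact deriv_int_1 (L := L) (u := fun t φ => u t φ ψ * Real.cos φ)
    (u' := fun t φ => u' t φ ψ * Real.cos φ) (k2 u hu) (k2 u' hu')
    (fun s hs φ => (hd s hs φ ψ).mul_const _) ht

lemma cont_E {u : ℝ → ℝ → ℝ → ℝ}
    (hu : Continuous fun q : ℝ × ℝ × ℝ => u q.1 q.2.1 q.2.2) :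
    Continuous fun t => E (u t) := by
  unfold E
  apply Continuous.mul continuous_const
  apply intervalIntegral.continuous_parametric_intervalIntegral_of_continuous'
  simp only [Function.uncurry_def]
  apply intervalIntegral.continuous_parametric_intervalIntegral_of_continuous'
  have : Continuous fun q : (ℝ × ℝ) × ℝ => u q.1.1 q.2 q.1.2 :=
    hu.comp (by fun_prop : Continuous fun q : (ℝ × ℝ) × ℝ => (q.1.1, q.2, q.1.2))
  simp only [Function.uncurry_def]
  fun_prop

/-! ### Elementary calculus -/

lemma decay_of_deriv {L b c : ℝ} (hb : 0 < b) (hc : 0 ≤ c) {u u' : ℝ → ℝ}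
    (hu : ContinuousOn u (Icc 0 L)) (hd : ∀ η ∈ Ioo 0 L, HasDerivAt u (u' η) η)
    (hle : ∀ η ∈ Ioo 0 L, |u' η| ≤ c * Real.exp (-b * η)) (hL : u L = 0)
    {η : ℝ} (hη : η ∈ Icc 0 L) : |u η| ≤ c / b * Real.exp (-b * η) := by
  have hE : ∀ x, HasDerivAt (fun t => c / b * Real.exp (-b * t)) (-(c * Real.exp (-b * x))) x := by
    intro x
    have := ((((hasDerivAt_id x).const_mul (-b)).exp).const_mul (c / b))
    refine this.congr_deriv ?_
    have hb' := hb.ne'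
    simp only [id]
    field_simp
  have hpos : 0 ≤ c / b * Real.exp (-b * L) := by positivity
  have hLm : L ∈ Icc 0 L := ⟨hη.1.trans hη.2, le_rfl⟩
  have key : ∀ v v' : ℝ → ℝ, ContinuousOn v (Icc 0 L) → (∀ η ∈ Ioo 0 L, HasDerivAt v (v' η) η) →
      (∀ η ∈ Ioo 0 L, |v' η| ≤ c * Real.exp (-b * η)) → v L = 0 →
      0 ≤ v η + c / b * Real.exp (-b * η) := by
    intro v v' hv hdv hlev hvL
    have anti : AntitoneOn (fun t => v t + c / b * Real.exp (-b * t)) (Icc 0 L) := by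
      apply antitoneOn_of_deriv_nonpos (convex_Icc 0 L)
      · exact hv.add (by fun_prop)
      · intro x hx
        rw [interior_Icc] at hx
        exact ((hdv x hx).add (hE x)).differentiableAt.differentiableWithinAt
      · intro x hx
        rw [interior_Icc] at hx
        rw [((hdv x hx).fun_add (hE x)).deriv]
        linarith [(abs_le.1 (hlev x hx)).2]
    have := anti hη hLm hη.2
    simp only [hvL] at this
    linarith
  have h1 := key u u' hu hd hle hL
  have h2 := key (fun t => - u t) (fun t => - u' t) hu.neg (fun x hx => (hd x hx).neg)
    (fun x hx => by rw [abs_neg]; exact hle x hx) (by simp [hL])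
  rw [abs_le]
  constructor <;> linarith

lemma deriv_at_min {α β x u' : ℝ} {u : ℝ → ℝ} (hx : x ∈ Icc α β)
    (hd : HasDerivWithinAt u u' (Icc α β) x) (hmin : ∀ y ∈ Icc α β, u x ≤ u y)
    {y : ℝ} (hy : y ∈ Icc α β) : 0 ≤ (y - x) * u' := by
  have h1 : IsLocalMinOn u (Icc α β) x :=
    Filter.eventually_of_mem self_mem_nhdsWithin hmin
  have h2 := h1.hasFDerivWithinAt_nonneg hd.hasFDerivWithinAt
    (sub_mem_posTangentConeAt_of_segment_subset ((convex_Icc α β).segment_subset hx hy))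
  simpa using h2

/-- Maximum principle. -/
lemma max_principle {L : ℝ} (hL : 0 < L) {F c w wη wφ : ℝ → ℝ → ℝ → ℝ}
    (hw : ContinuousOn (fun q : ℝ × ℝ × ℝ => w q.1 q.2.1 q.2.2) (milneDomain L))
    (dη : ∀ η ∈ Icc 0 L, ∀ φ ∈ Icc (-(π / 2)) (π / 2), ∀ ψ ∈ Icc (-π) π,
      HasDerivWithinAt (fun t => w t φ ψ) (wη η φ ψ) (Icc 0 L) η)
    (dφ : ∀ η ∈ Icc 0 L, ∀ φ ∈ Icc (-(π / 2)) (π / 2), ∀ ψ ∈ Icc (-π) π,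
      HasDerivWithinAt (fun t => w η t ψ) (wφ η φ ψ) (Icc (-(π / 2)) (π / 2)) φ)
    (hc : ∀ η ∈ Icc 0 L, ∀ φ ∈ Icc (-(π / 2)) (π / 2), ∀ ψ ∈ Icc (-π) π, 0 < c η φ ψ)
    (hT : ∀ η ∈ Icc 0 L, ∀ φ ∈ Icc (-(π / 2)) (π / 2), ∀ ψ ∈ Icc (-π) π,
      0 ≤ Real.sin φ * wη η φ ψ + F η φ ψ * Real.cos φ * wφ η φ ψ + c η φ ψ * w η φ ψ)
    (hin : ∀ φ ∈ Ioc 0 (π / 2), ∀ ψ ∈ Icc (-π) π, 0 ≤ w 0 φ ψ)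
    (hre : ∀ φ ∈ Icc (-(π / 2)) (π / 2), ∀ ψ ∈ Icc (-π) π, w L φ ψ = w L (-φ) ψ) :
    ∀ η ∈ Icc 0 L, ∀ φ ∈ Icc (-(π / 2)) (π / 2), ∀ ψ ∈ Icc (-π) π, 0 ≤ w η φ ψ := by
  have hp := Real.pi_pos
  have hcomp : IsCompact (milneDomain L) :=
    isCompact_Icc.prod (isCompact_Icc.prod isCompact_Icc)
  have hne : (milneDomain L).Nonempty :=
    ⟨(0, 0, 0), ⟨le_rfl, hL.le⟩, ⟨by simp; linarith, by simp; linarith⟩, ⟨by simp; linarith, by simp; linarith⟩⟩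
  -- a minimum away from the reflected incoming part
  have hmin : ∃ η ∈ Icc 0 L, ∃ φ ∈ Icc (-(π / 2)) (π / 2), ∃ ψ ∈ Icc (-π) π,
      (η = L → 0 ≤ φ) ∧ ∀ η' ∈ Icc 0 L, ∀ φ' ∈ Icc (-(π / 2)) (π / 2), ∀ ψ' ∈ Icc (-π) π,
        w η φ ψ ≤ w η' φ' ψ' := by
    obtain ⟨⟨η, φ, ψ⟩, ⟨h1, h2, h3⟩, hm⟩ := hcomp.exists_isMinOn hne hw
    have hm' : ∀ η' ∈ Icc 0 L, ∀ φ' ∈ Icc (-(π / 2)) (π / 2), ∀ ψ' ∈ Icc (-π) π,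
        w η φ ψ ≤ w η' φ' ψ' := fun η' a φ' b ψ' c => hm (show (η', φ', ψ') ∈ milneDomain L from ⟨a, b, c⟩)
    by_cases hcase : η = L ∧ φ < 0
    · obtain ⟨rfl, hφ⟩ := hcase
      refine ⟨η, h1, -φ, ⟨by linarith [h2.2], by linarith [h2.1]⟩, ψ, h3, fun _ => by linarith, ?_⟩
      have : w η φ ψ = w η (-φ) ψ := hre φ h2 ψ h3
      rw [← this]
      exact hm'
    · exact ⟨η, h1, φ, h2, ψ, h3, fun h => not_lt.1 fun h' => hcase ⟨h, h'⟩, hm'⟩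
  obtain ⟨η, h1, φ, h2, ψ, h3, hL', hm⟩ := hmin
  suffices h : 0 ≤ w η φ ψ from fun η' a φ' b ψ' c => h.trans (hm η' a φ' b ψ' c)
  by_contra! hneg
  have hT' := hT η h1 φ h2 ψ h3
  have hprod : c η φ ψ * w η φ ψ < 0 := mul_neg_of_pos_of_neg (hc η h1 φ h2 ψ h3) hneg
  have D1 : ∀ y ∈ Icc 0 L, 0 ≤ (y - η) * wη η φ ψ := fun y hy =>
    deriv_at_min h1 (dη η h1 φ h2 ψ h3) (fun y hy => hm y hy φ h2 ψ h3) hy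
  have D2 : ∀ y ∈ Icc (-(π / 2)) (π / 2), 0 ≤ (y - φ) * wφ η φ ψ := fun y hy =>
    deriv_at_min h2 (dφ η h1 φ h2 ψ h3) (fun y hy => hm η h1 y hy ψ h3) hy
  have hl := D1 0 ⟨le_rfl, hL.le⟩
  have hr := D1 L ⟨hL.le, le_rfl⟩
  have s1 : Real.sin φ * wη η φ ψ ≤ 0 := by
    rcases eq_or_lt_of_le h1.1 with h0 | h0
    · have hφ : φ ≤ 0 := by
        by_contra! hpos
        have := hin φ ⟨hpos, h2.2⟩ ψ h3
        rw [h0] at this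
        linarith
      have hs : Real.sin φ ≤ 0 := Real.sin_nonpos_of_nonpos_of_neg_pi_le hφ (by linarith [h2.1])
      rw [← h0, sub_zero] at hr
      have := nonneg_of_mul_nonneg_right hr hL
      rw [← h0]
      exact mul_nonpos_of_nonpos_of_nonneg hs this
    · rcases eq_or_lt_of_le h1.2 with hl0 | hl0
      · have hφ := hL' hl0
        have hs : 0 ≤ Real.sin φ := Real.sin_nonneg_of_nonneg_of_le_pi hφ (by linarith [h2.2])
        have : wη η φ ψ ≤ 0 := by nlinarith
        exact mul_nonpos_of_nonneg_of_nonpos hs this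
      · have : wη η φ ψ = 0 := by
          apply le_antisymm
          · nlinarith
          · exact nonneg_of_mul_nonneg_right hr (by linarith)
        simp [this]
  have s2 : F η φ ψ * Real.cos φ * wφ η φ ψ = 0 := by
    have hl := D2 (-(π / 2)) ⟨le_rfl, neg_half_pi_le⟩
    have hr := D2 (π / 2) ⟨neg_half_pi_le, le_rfl⟩
    rcases eq_or_lt_of_le h2.1 with h0 | h0
    · rw [← h0]; simp
    · rcases eq_or_lt_of_le h2.2 with hl0 | hl0
      · rw [hl0]; simp
      · have : wφ η φ ψ = 0 := by
          apply le_antisymm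
          · nlinarith
          · exact nonneg_of_mul_nonneg_right hr (by linarith)
        simp [this]
  linarith

/-! ### The core problem -/

/-- A solution of the homogeneous-limit problem, with all functions extended continuously. -/
structure Core (L : ℝ) (F : ℝ → ℝ → ℝ) (g gη gφ S : ℝ → ℝ → ℝ → ℝ) : Prop where
  hL : 1 ≤ L
  cg : Continuous fun q : ℝ × ℝ × ℝ => g q.1 q.2.1 q.2.2
  cgη : Continuous fun q : ℝ × ℝ × ℝ => gη q.1 q.2.1 q.2.2
  cgφ : Continuous fun q : ℝ × ℝ × ℝ => gφ q.1 q.2.1 q.2.2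
  cS : Continuous fun q : ℝ × ℝ × ℝ => S q.1 q.2.1 q.2.2
  cF : ∀ η, Continuous (F η)
  dη : ∀ η ∈ Icc 0 L, ∀ φ ψ, HasDerivWithinAt (fun t => g t φ ψ) (gη η φ ψ) (Icc 0 L) η
  dφ : ∀ φ ∈ Icc (-(π / 2)) (π / 2), ∀ η ψ,
    HasDerivWithinAt (fun t => g η t ψ) (gφ η φ ψ) (Icc (-(π / 2)) (π / 2)) φ
  eqn : ∀ η ∈ Icc 0 L, ∀ φ ∈ Icc (-(π / 2)) (π / 2), ∀ ψ ∈ Icc (-π) π,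
    Real.sin φ * gη η φ ψ + F η ψ * Real.cos φ * gφ η φ ψ + g η φ ψ - E (g η) = S η φ ψ
  refl : ∀ φ ∈ Icc (-(π / 2)) (π / 2), ∀ ψ ∈ Icc (-π) π, g L φ ψ = g L (-φ) ψ
  hQL : E (fun φ ψ => Real.sin φ ^ 2 * g L φ ψ) = 0

lemma cont2 {v : ℝ → ℝ → ℝ → ℝ} (hv : Continuous fun q : ℝ × ℝ × ℝ => v q.1 q.2.1 q.2.2)
    (η : ℝ) : Continuous fun q : ℝ × ℝ => v η q.1 q.2 :=
  hv.comp (by fun_prop : Continuous fun q : ℝ × ℝ => (η, q.1, q.2))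

section core
variable {L : ℝ} {F : ℝ → ℝ → ℝ} {g gη gφ S : ℝ → ℝ → ℝ → ℝ}

lemma Core.ibp (C : Core L F g gη gφ S) (η : ℝ) {w m : ℝ → ℝ} (hw : Continuous w)
    (hm : Continuous m)
    (hd : ∀ φ, HasDerivAt (fun φ => w φ * Real.cos φ ^ 2) (-(m φ * Real.cos φ)) φ) :
    E (fun φ ψ => w φ * (F η ψ * Real.cos φ * gφ η φ ψ))
      = E (fun φ ψ => m φ * (F η ψ * g η φ ψ)) := by
  apply E_congr_inner
  intro ψ _
  have c1 : Continuous fun φ => g η φ ψ := cont_slice (cont2 C.cg η) ψ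
  have c2 : Continuous fun φ => gφ η φ ψ := cont_slice (cont2 C.cgφ η) ψ
  have key := intervalIntegral.integral_eq_sub_of_hasDerivAt_of_le neg_half_pi_le
    (f := fun φ => F η ψ * (g η φ ψ * (w φ * Real.cos φ ^ 2)))
    (f' := fun φ => w φ * (F η ψ * Real.cos φ * gφ η φ ψ) * Real.cos φ
      - m φ * (F η ψ * g η φ ψ) * Real.cos φ)
    (by fun_prop) ?_ (Continuous.intervalIntegrable (by fun_prop) _ _)
  · rw [intervalIntegral.integral_sub (Continuous.intervalIntegrable (by fun_prop) _ _)
      (Continuous.intervalIntegrable (by fun_prop) _ _)] at key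
    simp at key
    linarith
  · intro φ hφ
    have h1 := (C.dφ φ (Ioo_subset_Icc_self hφ) η ψ).hasDerivAt (Icc_mem_nhds hφ.1 hφ.2)
    refine ((h1.mul (hd φ)).const_mul (F η ψ)).congr_deriv ?_
    ring

lemma Core.J_deriv (C : Core L F g gη gφ S) {η : ℝ} (hη : η ∈ Ioo 0 L) :
    HasDerivAt (fun t => E (fun φ ψ => Real.sin φ * g t φ ψ))
      (E (S η) - E (fun φ ψ => 2 * Real.sin φ * (F η ψ * g η φ ψ))) η := by
  have cg := C.cg
  have cgη := C.cgη
  have h := deriv_E (L := L) (u := fun t φ ψ => Real.sin φ * g t φ ψ)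
    (u' := fun t φ ψ => Real.sin φ * gη t φ ψ) (by fun_prop) (by fun_prop)
    (fun t ht φ ψ => ((C.dη t (Ioo_subset_Icc_self ht) φ ψ).hasDerivAt
      (Icc_mem_nhds ht.1 ht.2)).const_mul _) hη
  refine h.congr_deriv ?_
  have cF := C.cF η
  have cF' : Continuous fun q : ℝ × ℝ => F η q.2 := cF.comp continuous_snd
  have c1 := cont2 C.cg η
  have c2 := cont2 C.cgφ η
  have c3 := cont2 C.cS η
  have e1 : E (fun φ ψ => Real.sin φ * gη η φ ψ)
      = E (fun φ ψ => (S η φ ψ - (fun φ ψ => 1 * (F η ψ * Real.cos φ * gφ η φ ψ)) φ ψ)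
        - (g η φ ψ - E (g η))) := by
    apply E_congr
    intro φ hφ ψ hψ
    have := C.eqn η (Ioo_subset_Icc_self hη) φ hφ ψ hψ
    simp only
    linarith
  rw [e1, E_sub (by fun_prop) (by fun_prop), E_sub (by fun_prop) (by fun_prop),
    E_sub (by fun_prop) (by fun_prop), E_const,
    C.ibp η (w := fun _ => 1) (m := fun φ => 2 * Real.sin φ) (by fun_prop) (by fun_prop)]
  · ring
  · intro φ
    refine (((Real.hasDerivAt_cos φ).pow 2).const_mul 1).congr_deriv ?_
    norm_num
    ring

lemma Core.Q_deriv (C : Core L F g gη gφ S) {η : ℝ} (hη : η ∈ Ioo 0 L) :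
    HasDerivAt (fun t => E (fun φ ψ => Real.sin φ ^ 2 * g t φ ψ))
      (E (fun φ ψ => Real.sin φ * S η φ ψ)
        - E (fun φ ψ => (3 * Real.sin φ ^ 2 - 1) * (F η ψ * g η φ ψ))
        - E (fun φ ψ => Real.sin φ * g η φ ψ)) η := by
  have cg := C.cg
  have cgη := C.cgη
  have h := deriv_E (L := L) (u := fun t φ ψ => Real.sin φ ^ 2 * g t φ ψ)
    (u' := fun t φ ψ => Real.sin φ ^ 2 * gη t φ ψ) (by fun_prop) (by fun_prop)
    (fun t ht φ ψ => ((C.dη t (Ioo_subset_Icc_self ht) φ ψ).hasDerivAt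
      (Icc_mem_nhds ht.1 ht.2)).const_mul _) hη
  refine h.congr_deriv ?_
  have cF := C.cF η
  have cF' : Continuous fun q : ℝ × ℝ => F η q.2 := cF.comp continuous_snd
  have c1 := cont2 C.cg η
  have c2 := cont2 C.cgφ η
  have c3 := cont2 C.cS η
  have e1 : E (fun φ ψ => Real.sin φ ^ 2 * gη η φ ψ)
      = E (fun φ ψ => (Real.sin φ * S η φ ψ
          - (fun φ ψ => Real.sin φ * (F η ψ * Real.cos φ * gφ η φ ψ)) φ ψ)
        - (Real.sin φ * g η φ ψ - E (g η) * Real.sin φ)) := by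
    apply E_congr
    intro φ hφ ψ hψ
    have := C.eqn η (Ioo_subset_Icc_self hη) φ hφ ψ hψ
    simp only
    rw [← this]
    ring
  rw [e1, E_sub (by fun_prop) (by fun_prop), E_sub (by fun_prop) (by fun_prop),
    E_sub (by fun_prop) (by fun_prop), E_const_mul, E_sin,
    C.ibp η (w := fun φ => Real.sin φ) (m := fun φ => 3 * Real.sin φ ^ 2 - 1)
      (by fun_prop) (by fun_prop)]
  · ring
  · intro φ
    refine ((Real.hasDerivAt_sin φ).mul ((Real.hasDerivAt_cos φ).pow 2)).congr_deriv ?_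
    simp only [Pi.pow_apply]
    norm_num
    have := Real.sin_sq φ
    rw [this]
    have h3 : Real.sin φ * (2 * Real.cos φ * Real.sin φ) = 2 * Real.cos φ * Real.sin φ ^ 2 := by ring
    rw [h3, this]
    ring

lemma Core.JL (C : Core L F g gη gφ S) : E (fun φ ψ => Real.sin φ * g L φ ψ) = 0 := by
  have h : E (fun φ ψ => Real.sin φ * g L φ ψ) = E (fun φ ψ => - (Real.sin φ * g L φ ψ)) := by
    apply E_congr_inner
    intro ψ hψ
    have := intervalIntegral.integral_comp_neg (a := -(π / 2)) (b := π / 2)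
      (fun φ => Real.sin φ * g L φ ψ * Real.cos φ)
    simp only [neg_neg] at this
    rw [← this]
    apply intervalIntegral.integral_congr
    intro φ hφ
    rw [uIcc_of_le neg_half_pi_le] at hφ
    simp only [Real.sin_neg, Real.cos_neg, C.refl φ hφ ψ hψ]
    ring
  rw [E_neg] at h
  linarith

variable {b M N τ : ℝ}

lemma Core.J_bound (C : Core L F g gη gφ S) (hb : 0 < b) (hM : 0 ≤ M) (hN : 0 ≤ N) (hτ : 0 ≤ τ)
    (hF : ∀ η ∈ Icc 0 L, ∀ ψ, |F η ψ| ≤ τ)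
    (hS : ∀ η ∈ Icc 0 L, ∀ φ ∈ Icc (-(π / 2)) (π / 2), ∀ ψ ∈ Icc (-π) π,
      |S η φ ψ| ≤ M * Real.exp (-b * η))
    (hg : ∀ η ∈ Icc 0 L, ∀ φ ∈ Icc (-(π / 2)) (π / 2), ∀ ψ ∈ Icc (-π) π,
      |g η φ ψ| ≤ N * Real.exp (-b * η)) {η : ℝ} (hη : η ∈ Icc 0 L) :
    |E (fun φ ψ => Real.sin φ * g η φ ψ)| ≤ (M + 2 * τ * N) / b * Real.exp (-b * η) := by
  have cg := C.cg
  refine decay_of_deriv (L := L) hb (by positivity)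
    (u := fun t => E (fun φ ψ => Real.sin φ * g t φ ψ))
    (cont_E (u := fun t φ ψ => Real.sin φ * g t φ ψ) (by fun_prop)).continuousOn
    (fun η hη => C.J_deriv hη) ?_ C.JL hη
  intro t ht
  have ht' := Ioo_subset_Icc_self ht
  have cF := C.cF t
  have cF' : Continuous fun q : ℝ × ℝ => F t q.2 := (C.cF t).comp continuous_snd
  have c1 := cont2 C.cg t
  have c3 := cont2 C.cS t
  have b1 : |E (S t)| ≤ M * Real.exp (-b * t) := by
    rw [← E_const (M * Real.exp (-b * t))]
    exact E_abs_le c3 (by fun_prop) (hS t ht')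
  have b2 : |E (fun φ ψ => 2 * Real.sin φ * (F t ψ * g t φ ψ))|
      ≤ 2 * τ * N * Real.exp (-b * t) := by
    rw [← E_const (2 * τ * N * Real.exp (-b * t))]
    refine E_abs_le (by fun_prop) (by fun_prop) fun φ hφ ψ hψ => ?_
    have h1 := hF t ht' ψ
    have h2 := hg t ht' φ hφ ψ hψ
    calc |2 * Real.sin φ * (F t ψ * g t φ ψ)|
        = 2 * |Real.sin φ| * (|F t ψ| * |g t φ ψ|) := by
          rw [abs_mul, abs_mul, abs_mul]; norm_num
      _ ≤ 2 * 1 * (τ * (N * Real.exp (-b * t))) := by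
          gcongr
          exact Real.abs_sin_le_one φ
      _ = _ := by ring
  calc _ ≤ |E (S t)| + |E (fun φ ψ => 2 * Real.sin φ * (F t ψ * g t φ ψ))| := abs_sub _ _
    _ ≤ _ := by linarith

lemma Core.Q_bound (C : Core L F g gη gφ S) (hb : 0 < b) (hM : 0 ≤ M) (hN : 0 ≤ N) (hτ : 0 ≤ τ)
    (hF : ∀ η ∈ Icc 0 L, ∀ ψ, |F η ψ| ≤ τ)
    (hS : ∀ η ∈ Icc 0 L, ∀ φ ∈ Icc (-(π / 2)) (π / 2), ∀ ψ ∈ Icc (-π) π,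
      |S η φ ψ| ≤ M * Real.exp (-b * η))
    (hg : ∀ η ∈ Icc 0 L, ∀ φ ∈ Icc (-(π / 2)) (π / 2), ∀ ψ ∈ Icc (-π) π,
      |g η φ ψ| ≤ N * Real.exp (-b * η)) {η : ℝ} (hη : η ∈ Icc 0 L) :
    |E (fun φ ψ => Real.sin φ ^ 2 * g η φ ψ)|
      ≤ (M + 2 * τ * N + (M + 2 * τ * N) / b) / b * Real.exp (-b * η) := by
  have cg := C.cg
  refine decay_of_deriv (L := L) hb (by positivity)
    (u := fun t => E (fun φ ψ => Real.sin φ ^ 2 * g t φ ψ))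
    (cont_E (u := fun t φ ψ => Real.sin φ ^ 2 * g t φ ψ) (by fun_prop)).continuousOn
    (fun η hη => C.Q_deriv hη) ?_ C.hQL hη
  intro t ht
  have ht' := Ioo_subset_Icc_self ht
  have cF := C.cF t
  have cF' : Continuous fun q : ℝ × ℝ => F t q.2 := (C.cF t).comp continuous_snd
  have c1 := cont2 C.cg t
  have c3 := cont2 C.cS t
  have b1 : |E (fun φ ψ => Real.sin φ * S t φ ψ)| ≤ M * Real.exp (-b * t) := by
    rw [← E_const (M * Real.exp (-b * t))]
    refine E_abs_le (by fun_prop) (by fun_prop) fun φ hφ ψ hψ => ?_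
    rw [abs_mul]
    calc _ ≤ 1 * (M * Real.exp (-b * t)) := by
          gcongr
          · exact Real.abs_sin_le_one φ
          · exact hS t ht' φ hφ ψ hψ
      _ = _ := by ring
  have b2 : |E (fun φ ψ => (3 * Real.sin φ ^ 2 - 1) * (F t ψ * g t φ ψ))|
      ≤ 2 * τ * N * Real.exp (-b * t) := by
    rw [← E_const (2 * τ * N * Real.exp (-b * t))]
    refine E_abs_le (by fun_prop) (by fun_prop) fun φ hφ ψ hψ => ?_
    have h1 := hF t ht' ψ
    have h2 := hg t ht' φ hφ ψ hψ
    have h3 : |3 * Real.sin φ ^ 2 - 1| ≤ 2 := by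
      have := Real.sin_sq_le_one φ
      rw [abs_le]; constructor <;> nlinarith [sq_nonneg (Real.sin φ)]
    calc |(3 * Real.sin φ ^ 2 - 1) * (F t ψ * g t φ ψ)|
        = |3 * Real.sin φ ^ 2 - 1| * (|F t ψ| * |g t φ ψ|) := by
          rw [abs_mul, abs_mul]
      _ ≤ 2 * (τ * (N * Real.exp (-b * t))) := by
          gcongr
      _ = _ := by ring
  have b3 := C.J_bound hb hM hN hτ hF hS hg ht'
  calc _ ≤ |E (fun φ ψ => Real.sin φ * S t φ ψ)
        - E (fun φ ψ => (3 * Real.sin φ ^ 2 - 1) * (F t ψ * g t φ ψ))|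
        + |E (fun φ ψ => Real.sin φ * g t φ ψ)| := abs_sub _ _
    _ ≤ |E (fun φ ψ => Real.sin φ * S t φ ψ)|
        + |E (fun φ ψ => (3 * Real.sin φ ^ 2 - 1) * (F t ψ * g t φ ψ))|
        + |E (fun φ ψ => Real.sin φ * g t φ ψ)| := by
        gcongr
        exact abs_sub _ _
    _ ≤ _ := by
        rw [add_mul]
        linarith

/-- Bound on the right-hand side. -/
lemma Core.P_bound (C : Core L F g gη gφ S) {q : ℝ}
    (hg : ∀ η ∈ Icc 0 L, ∀ φ ∈ Icc (-(π / 2)) (π / 2), ∀ ψ ∈ Icc (-π) π,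
      |g η φ ψ| ≤ N * Real.exp (-b * η)) {η : ℝ} (hη : η ∈ Icc 0 L)
    (hQ : |E (fun φ ψ => Real.sin φ ^ 2 * g η φ ψ)| ≤ q * Real.exp (-b * η)) :
    |E (g η)| ≤ (2 / 3 * N + q) * Real.exp (-b * η) := by
  have c1 := cont2 C.cg η
  have e : E (g η) = E (fun φ ψ => Real.cos φ ^ 2 * g η φ ψ)
      + E (fun φ ψ => Real.sin φ ^ 2 * g η φ ψ) := by
    rw [← E_add (by fun_prop) (by fun_prop)]
    apply E_congr
    intro φ _ ψ _
    rw [← add_mul, Real.cos_sq_add_sin_sq, one_mul]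
  have b1 : |E (fun φ ψ => Real.cos φ ^ 2 * g η φ ψ)| ≤ 2 / 3 * N * Real.exp (-b * η) := by
    have : 2 / 3 * N * Real.exp (-b * η)
        = E (fun φ _ => (N * Real.exp (-b * η)) * Real.cos φ ^ 2) := by
      rw [E_const_mul, E_cos2]; ring
    rw [this]
    refine E_abs_le (by fun_prop) (by fun_prop) fun φ hφ ψ hψ => ?_
    rw [abs_mul, abs_of_nonneg (sq_nonneg _), mul_comm]
    exact mul_le_mul_of_nonneg_right (hg η hη φ hφ ψ hψ) (sq_nonneg _)
  rw [e]
  refine (abs_add_le _ _).trans ?_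
  rw [add_mul]
  linarith

/-- Barrier estimate. -/
lemma Core.barrier (C : Core L F g gη gφ S) (hb : 0 < b) (hb1 : b < 1) (hτ1 : τ ≤ 1)
    (hF : ∀ η ∈ Icc 0 L, ∀ ψ, |F η ψ| ≤ τ) {A P d : ℝ} (hd : 0 ≤ d) (hdA : d ≤ A)
    (hPA : P + 3 * d ≤ (1 - b) * A)
    (hP : ∀ η ∈ Icc 0 L, ∀ φ ∈ Icc (-(π / 2)) (π / 2), ∀ ψ ∈ Icc (-π) π,
      |E (g η) + S η φ ψ| ≤ P * Real.exp (-b * η))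
    (hin : ∀ φ ∈ Ioc 0 (π / 2), ∀ ψ ∈ Icc (-π) π, |g 0 φ ψ| ≤ A) :
    ∀ η ∈ Icc 0 L, ∀ φ ∈ Icc (-(π / 2)) (π / 2), ∀ ψ ∈ Icc (-π) π,
      Real.exp (b * η) * |g η φ ψ| ≤ A + d * (Real.sin φ * (1 - η / L)) := by
  have hL0 : 0 < L := lt_of_lt_of_le one_pos C.hL
  have cg := C.cg
  have key : ∀ σ : ℝ, |σ| = 1 → ∀ η ∈ Icc 0 L, ∀ φ ∈ Icc (-(π / 2)) (π / 2), ∀ ψ ∈ Icc (-π) π,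
      0 ≤ A + d * (Real.sin φ * (1 - η / L)) - σ * (Real.exp (b * η) * g η φ ψ) := by
    intro σ hσ
    refine max_principle (L := L) hL0 (F := fun η _ ψ => F η ψ)
      (c := fun _ φ _ => 1 - b * Real.sin φ)
      (w := fun η φ ψ => A + d * (Real.sin φ * (1 - η / L)) - σ * (Real.exp (b * η) * g η φ ψ))
      (wη := fun η φ ψ => d * (Real.sin φ * (- (1 / L)))
        - σ * (Real.exp (b * η) * b * g η φ ψ + Real.exp (b * η) * gη η φ ψ))
      (wφ := fun η φ ψ => d * (Real.cos φ * (1 - η / L)) - σ * (Real.exp (b * η) * gφ η φ ψ))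
      ?_ ?_ ?_ ?_ ?_ ?_ ?_
    · apply Continuous.continuousOn
      fun_prop
    · intro η hη φ _ ψ _
      have h1 := C.dη η hη φ ψ
      have h2 : HasDerivAt (fun t : ℝ => Real.exp (b * t)) (Real.exp (b * η) * b) η := by
        refine (((hasDerivAt_id η).const_mul b).exp).congr_deriv ?_
        simp
      have h3 : HasDerivAt (fun t : ℝ => A + d * (Real.sin φ * (1 - t / L)))
          (d * (Real.sin φ * (- (1 / L)))) η :=
        (((((hasDerivAt_id η).div_const L).const_sub 1).const_mul _).const_mul d).const_add A
      exact h3.hasDerivWithinAt.sub ((h2.hasDerivWithinAt.mul h1).const_mul σ)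
    · intro η hη φ hφ ψ _
      have h1 := C.dφ φ hφ η ψ
      have h3 : HasDerivAt (fun t : ℝ => A + d * (Real.sin t * (1 - η / L)))
          (d * (Real.cos φ * (1 - η / L))) φ :=
        (((Real.hasDerivAt_sin φ).mul_const _).const_mul d).const_add A
      exact h3.hasDerivWithinAt.sub ((h1.const_mul _).const_mul σ)
    · intro η _ φ _ ψ _
      have h1 := Real.sin_le_one φ
      have h2 := Real.neg_one_le_sin φ
      nlinarith
    · intro η hη φ hφ ψ hψ
      have e := C.eqn η hη φ hφ ψ hψ
      have hx1 : η / L ≤ 1 := (div_le_one hL0).2 hη.2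
      have hx0 : 0 ≤ η / L := div_nonneg hη.1 hL0.le
      have hl1 : 1 / L ≤ 1 := (div_le_one hL0).2 C.hL
      have hl0 : 0 ≤ 1 / L := by positivity
      have hs1 := Real.sin_le_one φ
      have hs2 := Real.neg_one_le_sin φ
      set x := 1 - η / L with hx
      have hx1' : x ≤ 1 := by linarith
      have hx0' : 0 ≤ x := by linarith
      have hpp : |σ * (Real.exp (b * η) * (E (g η) + S η φ ψ))| ≤ P := by
        rw [abs_mul, hσ, one_mul, abs_mul, abs_of_pos (Real.exp_pos _)]
        calc _ ≤ Real.exp (b * η) * (P * Real.exp (-b * η)) :=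
              mul_le_mul_of_nonneg_left (hP η hη φ hφ ψ hψ) (Real.exp_pos _).le
          _ = P * (Real.exp (b * η) * Real.exp (-b * η)) := by ring
          _ = P := by rw [← Real.exp_add]; simp
      have t1 : d * (Real.sin φ ^ 2 * (1 / L)) ≤ d := by
        have : Real.sin φ ^ 2 * (1 / L) ≤ 1 := mul_le_one₀ (Real.sin_sq_le_one φ) hl0 hl1
        nlinarith
      have t2 : -d ≤ F η ψ * (d * (Real.cos φ ^ 2 * x)) := by
        have h1 : Real.cos φ ^ 2 * x ≤ 1 := mul_le_one₀ (Real.cos_sq_le_one φ) hx0' hx1'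
        have h0 : 0 ≤ Real.cos φ ^ 2 * x := by positivity
        have h2 := (abs_le.1 ((hF η hη ψ).trans hτ1)).1
        have h3 : 0 ≤ d * (Real.cos φ ^ 2 * x) := by positivity
        have h4 : d * (Real.cos φ ^ 2 * x) ≤ d := by nlinarith
        nlinarith
      have t3 : (1 - b) * (A - d) ≤ (1 - b * Real.sin φ) * (A + d * (Real.sin φ * x)) := by
        have h1 : -1 ≤ Real.sin φ * x := by nlinarith
        have h2 : A - d ≤ A + d * (Real.sin φ * x) := by nlinarith
        apply mul_le_mul _ h2 (by linarith) (by nlinarith)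
        nlinarith
      have t4 : (1 - b) * A - d ≤ (1 - b) * (A - d) := by nlinarith
      have hid : Real.sin φ * (d * (Real.sin φ * (- (1 / L)))
            - σ * (Real.exp (b * η) * b * g η φ ψ + Real.exp (b * η) * gη η φ ψ))
          + F η ψ * Real.cos φ * (d * (Real.cos φ * x) - σ * (Real.exp (b * η) * gφ η φ ψ))
          + (1 - b * Real.sin φ) * (A + d * (Real.sin φ * x) - σ * (Real.exp (b * η) * g η φ ψ))
          = - (d * (Real.sin φ ^ 2 * (1 / L))) + F η ψ * (d * (Real.cos φ ^ 2 * x))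
            + (1 - b * Real.sin φ) * (A + d * (Real.sin φ * x))
            - σ * (Real.exp (b * η) * (E (g η) + S η φ ψ)) := by
        rw [← e]
        ring
      rw [hid]
      linarith [(abs_le.1 hpp).2]
    · intro φ hφ ψ hψ
      have h1 := hin φ hφ ψ hψ
      have hs : 0 ≤ Real.sin φ :=
        Real.sin_nonneg_of_nonneg_of_le_pi hφ.1.le (by linarith [hφ.2, Real.pi_pos])
      have h2 : σ * g 0 φ ψ ≤ A := by
        calc _ ≤ |σ * g 0 φ ψ| := le_abs_self _
          _ = |g 0 φ ψ| := by rw [abs_mul, hσ, one_mul]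
          _ ≤ A := h1
      have h3 : 0 ≤ d * Real.sin φ := by positivity
      simp
      linarith
    · intro φ hφ ψ hψ
      simp only [div_self hL0.ne', sub_self, mul_zero, C.refl φ hφ ψ hψ]
  intro η hη φ hφ ψ hψ
  have h1 := key 1 (by simp) η hη φ hφ ψ hψ
  have h2 := key (-1) (by simp) η hη φ hφ ψ hψ
  rw [← abs_of_pos (Real.exp_pos (b * η)), ← abs_mul, abs_le]
  constructor <;> linarith

/-- Lower bound of the sin²-moment at `η = 0` coming from in-flow and out-flow bounds. -/
lemma half_moment {v : ℝ → ℝ → ℝ} (hv : Continuous fun q : ℝ × ℝ => v q.1 q.2) {α β d : ℝ}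
    (h1 : ∀ φ ∈ Ioc 0 (π / 2), ∀ ψ ∈ Icc (-π) π, α ≤ v φ ψ)
    (h2 : ∀ φ ∈ Icc (-(π / 2)) 0, ∀ ψ ∈ Icc (-π) π, -β - d * Real.sin φ ≤ v φ ψ) :
    (α - β) / 6 + d / 8 ≤ E (fun φ ψ => Real.sin φ ^ 2 * v φ ψ) := by
  have hp := Real.pi_pos
  have hc : Continuous fun q : ℝ × ℝ => Real.sin q.1 ^ 2 * v q.1 q.2 := by fun_prop
  have inner : ∀ ψ ∈ Icc (-π) π, (α - β) / 3 + d / 4 ≤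
      ∫ φ in (-(π / 2))..(π / 2), (Real.sin φ ^ 2 * v φ ψ) * Real.cos φ := by
    intro ψ hψ
    have c1 := cont_slice hv ψ
    have hci : Continuous fun φ => (Real.sin φ ^ 2 * v φ ψ) * Real.cos φ := by fun_prop
    rw [← intervalIntegral.integral_add_adjacent_intervals (b := 0)
      (hci.intervalIntegrable _ _) (hci.intervalIntegrable _ _)]
    have a1 : α / 3 ≤ ∫ φ in (0)..(π / 2), (Real.sin φ ^ 2 * v φ ψ) * Real.cos φ := by
      have : α / 3 = ∫ φ in (0)..(π / 2), α * (Real.sin φ ^ 2 * Real.cos φ) := by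
        rw [intervalIntegral.integral_const_mul, int_sin_pow]; norm_num
        ring
      rw [this]
      apply intervalIntegral.integral_mono_on (by linarith)
        (Continuous.intervalIntegrable (by fun_prop) _ _) (hci.intervalIntegrable _ _)
      intro φ hφ
      have hcos : 0 ≤ Real.cos φ := Real.cos_nonneg_of_mem_Icc ⟨by linarith [hφ.1], hφ.2⟩
      rcases eq_or_lt_of_le hφ.1 with h0 | h0
      · rw [← h0]; simp
      · have := h1 φ ⟨h0, hφ.2⟩ ψ hψ
        have h3 : 0 ≤ Real.sin φ ^ 2 * Real.cos φ := by positivity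
        nlinarith
    have a2 : -β / 3 + d / 4
        ≤ ∫ φ in (-(π / 2))..0, (Real.sin φ ^ 2 * v φ ψ) * Real.cos φ := by
      have : -β / 3 + d / 4 = ∫ φ in (-(π / 2))..0,
          ((-β) * (Real.sin φ ^ 2 * Real.cos φ) - d * (Real.sin φ ^ 3 * Real.cos φ)) := by
        rw [intervalIntegral.integral_sub (Continuous.intervalIntegrable (by fun_prop) _ _)
          (Continuous.intervalIntegrable (by fun_prop) _ _),
          intervalIntegral.integral_const_mul, intervalIntegral.integral_const_mul,
          int_sin_pow, int_sin_pow]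
        norm_num
        ring
      rw [this]
      apply intervalIntegral.integral_mono_on (by linarith)
        (Continuous.intervalIntegrable (by fun_prop) _ _) (hci.intervalIntegrable _ _)
      intro φ hφ
      have hcos : 0 ≤ Real.cos φ := Real.cos_nonneg_of_mem_Icc ⟨hφ.1, by linarith [hφ.2]⟩
      have := h2 φ hφ ψ hψ
      have h3 : 0 ≤ Real.sin φ ^ 2 * Real.cos φ := by positivity
      nlinarith
    linarith
  unfold E
  have : ∫ ψ in (-π)..π, ((α - β) / 3 + d / 4) ≤
      ∫ ψ in (-π)..π, ∫ φ in (-(π / 2))..(π / 2), (Real.sin φ ^ 2 * v φ ψ) * Real.cos φ :=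
    intervalIntegral.integral_mono_on neg_pi_le intervalIntegrable_const
      ((cont_inner (u := fun φ ψ => Real.sin φ ^ 2 * v φ ψ) hc).intervalIntegrable _ _) inner
  rw [intervalIntegral.integral_const] at this
  have h4 : (0:ℝ) ≤ 1 / (4 * π) := by positivity
  refine le_trans (le_of_eq ?_) (mul_le_mul_of_nonneg_left this h4)
  simp only [smul_eq_mul]
  field_simp
  ring

/-- The main a priori estimate. -/
lemma Core.main (C : Core L F g gη gφ S) (hb : 0 < b) (hb1 : b ≤ 1 / 20) (hM : 0 ≤ M)
    (hτ : 0 ≤ τ) (hτ1 : τ * (2 / b ^ 2 + 2 / b) ≤ 1 / 640)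
    (hF : ∀ η ∈ Icc 0 L, ∀ ψ, |F η ψ| ≤ τ)
    (hS : ∀ η ∈ Icc 0 L, ∀ φ ∈ Icc (-(π / 2)) (π / 2), ∀ ψ ∈ Icc (-π) π,
      |S η φ ψ| ≤ M * Real.exp (-b * η)) {a : ℝ}
    (hin : ∀ φ ∈ Ioc 0 (π / 2), ∀ ψ ∈ Icc (-π) π, |g 0 φ ψ + a| ≤ M) :
    ∀ η ∈ Icc 0 L, ∀ φ ∈ Icc (-(π / 2)) (π / 2), ∀ ψ ∈ Icc (-π) π,
      |g η φ ψ| ≤ 2000 * (1 / b ^ 2 + 1 / b + 1) * M * Real.exp (-b * η) := by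
  have hp := Real.pi_pos
  have hL0 : 0 < L := lt_of_lt_of_le one_pos C.hL
  have cg := C.cg
  obtain ⟨N, hN0, hN, hNatt⟩ : ∃ N, 0 ≤ N ∧ (∀ η ∈ Icc 0 L, ∀ φ ∈ Icc (-(π / 2)) (π / 2),
      ∀ ψ ∈ Icc (-π) π, Real.exp (b * η) * |g η φ ψ| ≤ N) ∧
      ∃ η ∈ Icc 0 L, ∃ φ ∈ Icc (-(π / 2)) (π / 2),
      ∃ ψ ∈ Icc (-π) π, Real.exp (b * η) * |g η φ ψ| = N := by
    have hcomp : IsCompact (milneDomain L) :=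
      isCompact_Icc.prod (isCompact_Icc.prod isCompact_Icc)
    have hne : (milneDomain L).Nonempty :=
      ⟨(0, 0, 0), ⟨le_rfl, hL0.le⟩, ⟨by simp; linarith, by simp; linarith⟩,
        ⟨by simp; linarith, by simp; linarith⟩⟩
    obtain ⟨⟨η, φ, ψ⟩, ⟨h1, h2, h3⟩, hm⟩ := hcomp.exists_isMaxOn hne
      (f := fun q : ℝ × ℝ × ℝ => Real.exp (b * q.1) * |g q.1 q.2.1 q.2.2|)
      (Continuous.continuousOn (by fun_prop))
    refine ⟨Real.exp (b * η) * |g η φ ψ|, by positivity, ?_, η, h1, φ, h2, ψ, h3, rfl⟩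
    exact fun η' a φ' b ψ' c => hm (show (η', φ', ψ') ∈ milneDomain L from ⟨a, b, c⟩)
  have hg : ∀ η ∈ Icc 0 L, ∀ φ ∈ Icc (-(π / 2)) (π / 2), ∀ ψ ∈ Icc (-π) π,
      |g η φ ψ| ≤ N * Real.exp (-b * η) := by
    intro η hη φ hφ ψ hψ
    have := mul_le_mul_of_nonneg_right (hN η hη φ hφ ψ hψ) (Real.exp_pos (-b * η)).le
    have e : Real.exp (b * η) * Real.exp (-b * η) = 1 := by rw [← Real.exp_add]; simp
    calc |g η φ ψ| = (Real.exp (b * η) * Real.exp (-b * η)) * |g η φ ψ| := by rw [e, one_mul]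
      _ = Real.exp (b * η) * |g η φ ψ| * Real.exp (-b * η) := by ring
      _ ≤ _ := this
  set C1 := 1 / b ^ 2 + 1 / b with hC1
  have hC1pos : 0 < C1 := by positivity
  have hC1big : 1 ≤ C1 := by
    have : 1 ≤ 1 / b := by rw [le_div_iff₀ hb]; linarith
    have : 0 < 1 / b ^ 2 := by positivity
    linarith
  have hδ : 2 * τ * C1 ≤ 1 / 640 := by
    have : 2 * τ * C1 = τ * (2 / b ^ 2 + 2 / b) := by rw [hC1]; ring
    linarith
  have hτle : τ ≤ 1 := by nlinarith
  set q := C1 * M + 1 / 640 * N with hq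
  have hQ : ∀ η ∈ Icc 0 L,
      |E (fun φ ψ => Real.sin φ ^ 2 * g η φ ψ)| ≤ q * Real.exp (-b * η) := by
    intro η hη
    refine (C.Q_bound hb hM hN0 hτ hF hS hg hη).trans ?_
    apply mul_le_mul_of_nonneg_right _ (Real.exp_pos _).le
    have : (M + 2 * τ * N + (M + 2 * τ * N) / b) / b = C1 * M + (2 * τ * C1) * N := by
      rw [hC1]; field_simp; ring
    rw [this, hq]
    nlinarith
  set P := 2 / 3 * N + q + M with hPdef
  have hP : ∀ η ∈ Icc 0 L, ∀ φ ∈ Icc (-(π / 2)) (π / 2), ∀ ψ ∈ Icc (-π) π,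
      |E (g η) + S η φ ψ| ≤ P * Real.exp (-b * η) := by
    intro η hη φ hφ ψ hψ
    refine (abs_add_le _ _).trans ?_
    have h1 := C.P_bound hg hη (hQ η hη)
    have h2 := hS η hη φ hφ ψ hψ
    rw [hPdef, add_mul]
    linarith
  have hin' : ∀ φ ∈ Ioc 0 (π / 2), ∀ ψ ∈ Icc (-π) π, |g 0 φ ψ| ≤ M + |a| := by
    intro φ hφ ψ hψ
    have h1 := hin φ hφ ψ hψ
    have h2 := abs_sub (g 0 φ ψ + a) a
    rw [add_sub_cancel_right] at h2
    linarith
  have ha0 := abs_nonneg a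
  have hC1M : 0 ≤ C1 * M := by positivity
  have hfin : N ≤ 2000 * (C1 + 1) * M := by
    by_cases hcase : N ≤ 4 / 5 * N + 2 * (C1 + 1) * M
    · nlinarith
    push Not at hcase
    -- first barrier
    have hNa : N ≤ M + |a| := by
      by_contra! hlt
      set A := max (M + |a|) (4 / 5 * N + 2 * (C1 + 1) * M) with hA
      have hA1 : M + |a| ≤ A := le_max_left _ _
      have hA2 : 4 / 5 * N + 2 * (C1 + 1) * M ≤ A := le_max_right _ _
      have hAN : A < N := max_lt hlt hcase
      have hA0 : 0 ≤ A := by linarith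
      have hB := C.barrier hb (by linarith) hτle hF (A := A) (P := P) (d := 0) le_rfl hA0
        (by
          have : 19 / 20 * A ≤ (1 - b) * A := mul_le_mul_of_nonneg_right (by linarith) hA0
          nlinarith) hP
        (fun φ hφ ψ hψ => (hin' φ hφ ψ hψ).trans hA1)
      obtain ⟨η, h1, φ, h2, ψ, h3, heq⟩ := hNatt
      have := hB η h1 φ h2 ψ h3
      linarith
    -- second barrier
    set A := |a| + 3 * (C1 + 1) * M with hA
    have hA0 : 0 ≤ A := by positivity
    have hB := C.barrier hb (by linarith) hτle hF (A := A) (P := P) (d := 1 / 40 * N)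
      (by positivity) (by nlinarith)
        (by
          have : 19 / 20 * A ≤ (1 - b) * A := mul_le_mul_of_nonneg_right (by linarith) hA0
          nlinarith) hP
        (fun φ hφ ψ hψ => (hin' φ hφ ψ hψ).trans (by nlinarith))
    have hL00 : (0 : ℝ) ∈ Icc 0 L := ⟨le_rfl, hL0.le⟩
    have hQ0 := hQ 0 hL00
    have hB0 : ∀ φ ∈ Icc (-(π / 2)) (π / 2), ∀ ψ ∈ Icc (-π) π,
        |g 0 φ ψ| ≤ A + 1 / 40 * N * Real.sin φ := by
      intro φ hφ ψ hψ
      have := hB 0 hL00 φ hφ ψ hψ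
      simpa using this
    simp only [mul_zero, Real.exp_zero, mul_one] at hQ0
    have c0 := cont2 C.cg 0
    have hlow : (|a| - M - A) / 6 + (1 / 40 * N) / 8
        ≤ |E (fun φ ψ => Real.sin φ ^ 2 * g 0 φ ψ)| := by
      rcases le_total 0 a with hsgn | hsgn
      · have := half_moment (v := fun φ ψ => - g 0 φ ψ) c0.neg (α := |a| - M) (β := A)
          (d := 1 / 40 * N)
          (fun φ hφ ψ hψ => by
            have := (abs_le.1 (hin φ hφ ψ hψ)).2
            rw [abs_of_nonneg hsgn]
            linarith)
          (fun φ hφ ψ hψ => by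
            have := (abs_le.1 (hB0 φ ⟨hφ.1, by linarith [hφ.2]⟩ ψ hψ)).2
            linarith)
        refine this.trans ?_
        have e : E (fun φ ψ => Real.sin φ ^ 2 * (- g 0 φ ψ))
            = - E (fun φ ψ => Real.sin φ ^ 2 * g 0 φ ψ) := by
          rw [← E_neg]; simp only [mul_neg]
        rw [e]
        exact neg_le_abs _
      · have := half_moment (v := fun φ ψ => g 0 φ ψ) c0 (α := |a| - M) (β := A)
          (d := 1 / 40 * N)
          (fun φ hφ ψ hψ => by
            have := (abs_le.1 (hin φ hφ ψ hψ)).1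
            rw [abs_of_nonpos hsgn]
            linarith)
          (fun φ hφ ψ hψ => by
            have := (abs_le.1 (hB0 φ ⟨hφ.1, by linarith [hφ.2]⟩ ψ hψ)).1
            linarith)
        exact this.trans (le_abs_self _)
    have h5 := hlow.trans hQ0
    rw [hq, hA] at h5
    nlinarith
  intro η hη φ hφ ψ hψ
  exact (hg η hη φ hφ ψ hψ).trans (mul_le_mul_of_nonneg_right hfin (Real.exp_pos _).le)

end core

/-! ### From classical solutions to the core problem -/

/-- Clamp to an interval. -/
def clamp (α β x : ℝ) : ℝ := max α (min β x)

lemma clamp_mem {α β : ℝ} (h : α ≤ β) (x : ℝ) : clamp α β x ∈ Icc α β :=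
  ⟨le_max_left _ _, max_le h (min_le_left _ _)⟩

lemma clamp_eq {α β x : ℝ} (h : x ∈ Icc α β) : clamp α β x = x := by
  unfold clamp
  rw [min_eq_right h.2, max_eq_right h.1]

lemma continuous_clamp (α β : ℝ) : Continuous (clamp α β) := by
  unfold clamp
  fun_prop

/-- Clamp to the domain. -/
def clD (L : ℝ) (p : ℝ × ℝ × ℝ) : ℝ × ℝ × ℝ :=
  (clamp 0 L p.1, clamp (-(π / 2)) (π / 2) p.2.1, clamp (-π) π p.2.2)

lemma continuous_clD (L : ℝ) : Continuous (clD L) := by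
  unfold clD
  have := continuous_clamp
  fun_prop

lemma clD_mem {L : ℝ} (hL : 0 ≤ L) (p : ℝ × ℝ × ℝ) : clD L p ∈ milneDomain L :=
  ⟨clamp_mem hL _, clamp_mem neg_half_pi_le _, clamp_mem neg_pi_le _⟩

lemma clD_eq {L : ℝ} {p : ℝ × ℝ × ℝ} (hp : p ∈ milneDomain L) : clD L p = p := by
  obtain ⟨h1, h2, h3⟩ := hp
  unfold clD
  rw [clamp_eq h1, clamp_eq h2, clamp_eq h3]

lemma cont_clD {L : ℝ} (hL : 0 ≤ L) {u : ℝ × ℝ × ℝ → ℝ} (hu : ContinuousOn u (milneDomain L)) :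
    Continuous fun p => u (clD L p) :=
  hu.comp_continuous (continuous_clD L) (clD_mem hL)

lemma uniqueDiff_D {L : ℝ} (hL : 0 < L) : UniqueDiffOn ℝ (milneDomain L) :=
  (uniqueDiffOn_Icc hL).prod ((uniqueDiffOn_Icc (by linarith [Real.pi_pos])).prod
    (uniqueDiffOn_Icc (by linarith [Real.pi_pos])))

lemma interior_D (L : ℝ) : interior (milneDomain L)
    = Ioo (0 : ℝ) L ×ˢ Ioo (-(π / 2)) (π / 2) ×ˢ Ioo (-π) π := by
  unfold milneDomain
  rw [interior_prod_eq, interior_prod_eq, interior_Icc, interior_Icc, interior_Icc]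

lemma closure_interior_D {L : ℝ} (hL : 0 < L) : closure (interior (milneDomain L))
    = milneDomain L := by
  have hp := Real.pi_pos
  rw [interior_D, closure_prod_eq, closure_prod_eq, closure_Ioo hL.ne, closure_Ioo (by linarith),
    closure_Ioo (by linarith)]
  rfl

lemma force_bound {R₁ R₂ ε L Rm : ℝ} (hRm : 0 < Rm) (h1 : Rm ≤ R₁) (h2 : Rm ≤ R₂) (hε : 0 < ε)
    (hεL : ε * L ≤ Rm / 2) {η : ℝ} (hη : η ∈ Icc 0 L) (ψ : ℝ) :
    |force R₁ R₂ ε η ψ| ≤ ε * (2 / Rm) := by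
  unfold force
  have h3 : ε * η ≤ ε * L := mul_le_mul_of_nonneg_left hη.2 hε.le
  have key : ∀ R x : ℝ, Rm ≤ R → x ^ 2 / (R - ε * η) ≤ x ^ 2 * (2 / Rm) ∧
      0 ≤ x ^ 2 / (R - ε * η) := by
    intro R x hR
    have hd : Rm / 2 ≤ R - ε * η := by linarith
    have hd0 : 0 < R - ε * η := by linarith
    refine ⟨?_, by positivity⟩
    rw [div_eq_mul_inv]
    apply mul_le_mul_of_nonneg_left _ (sq_nonneg _)
    rw [show 2 / Rm = (Rm / 2)⁻¹ by rw [inv_div]]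
    exact inv_anti₀ (by linarith) hd
  obtain ⟨a1, a2⟩ := key R₁ (Real.sin ψ) h1
  obtain ⟨b1, b2⟩ := key R₂ (Real.cos ψ) h2
  rw [abs_mul, abs_neg, abs_of_pos hε, abs_of_nonneg (by positivity)]
  apply mul_le_mul_of_nonneg_left _ hε.le
  have := Real.sin_sq_add_cos_sq ψ
  calc _ ≤ Real.sin ψ ^ 2 * (2 / Rm) + Real.cos ψ ^ 2 * (2 / Rm) := add_le_add a1 b1
    _ = 2 / Rm := by rw [← add_mul, this, one_mul]

lemma core_of_solution {R₁ R₂ ε n Rm K M : ℝ} (hRm : 0 < Rm) (h1 : Rm ≤ R₁) (h2 : Rm ≤ R₂)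
    (hε : 0 < ε) (hL1 : 1 ≤ layerL ε n)
    (hεL : ε * layerL ε n ≤ Rm / 2) {h : ℝ → ℝ → ℝ} {S f : ℝ × ℝ × ℝ → ℝ}
    (hD : DataBounds K M (layerL ε n) h S) (hf : IsMilneSolution R₁ R₂ ε n h S f) :
    Core (layerL ε n) (force R₁ R₂ ε)
      (fun η φ ψ => f (clD (layerL ε n) (η, φ, ψ)) - limitValue (layerL ε n) f)
      (fun η φ ψ => fderivWithin ℝ f (milneDomain (layerL ε n)) (clD (layerL ε n) (η, φ, ψ))
        (1, 0, 0))
      (fun η φ ψ => fderivWithin ℝ f (milneDomain (layerL ε n)) (clD (layerL ε n) (η, φ, ψ))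
        (0, 1, 0))
      (fun η φ ψ => S (clD (layerL ε n) (η, φ, ψ))) := by
  have hL0 : 0 < layerL ε n := lt_of_lt_of_le one_pos hL1
  obtain ⟨hsm, heqn, hinf, hrefl⟩ := hf
  set L := layerL ε n with hLdef
  set a := limitValue L f with ha
  have cf : Continuous fun p => f (clD L p) := cont_clD hL0.le hsm.continuousOn
  have cS : Continuous fun p => S (clD L p) := cont_clD hL0.le hD.sSmooth.continuousOn
  have cfd : ContinuousOn (fderivWithin ℝ f (milneDomain L)) (milneDomain L) :=
    hsm.continuousOn_fderivWithin (uniqueDiff_D hL0) le_rfl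
  have cfη : Continuous fun p => fderivWithin ℝ f (milneDomain L) (clD L p) (1, 0, 0) :=
    cont_clD hL0.le (u := fun p => fderivWithin ℝ f (milneDomain L) p (1, 0, 0))
      (cfd.clm_apply continuousOn_const)
  have cfφ : Continuous fun p => fderivWithin ℝ f (milneDomain L) (clD L p) (0, 1, 0) :=
    cont_clD hL0.le (u := fun p => fderivWithin ℝ f (milneDomain L) p (0, 1, 0))
      (cfd.clm_apply continuousOn_const)
  have hfd : ∀ p, HasFDerivWithinAt f (fderivWithin ℝ f (milneDomain L) (clD L p))
      (milneDomain L) (clD L p) := fun p =>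
    ((hsm.differentiableOn one_ne_zero) _ (clD_mem hL0.le p)).hasFDerivWithinAt
  have dη : ∀ η ∈ Icc 0 L, ∀ φ ψ, HasDerivWithinAt (fun t => f (clD L (t, φ, ψ)))
      (fderivWithin ℝ f (milneDomain L) (clD L (η, φ, ψ)) (1, 0, 0)) (Icc 0 L) η := by
    intro η hη φ ψ
    have hcv : HasDerivWithinAt (fun t : ℝ => (t, clamp (-(π / 2)) (π / 2) φ, clamp (-π) π ψ))
        (1, 0, 0) (Icc 0 L) η :=
      (hasDerivAt_id η |>.prodMk ((hasDerivAt_const η _).prodMk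
        (hasDerivAt_const η _))).hasDerivWithinAt
    have hpt : clD L (η, φ, ψ) = (η, clamp (-(π / 2)) (π / 2) φ, clamp (-π) π ψ) := by
      simp only [clD, clamp_eq hη]
    have := hfd (η, φ, ψ)
    rw [hpt] at this ⊢
    have h3 := this.comp_hasDerivWithinAt η hcv
      (t := milneDomain L)
      (fun t ht => ⟨ht, clamp_mem neg_half_pi_le _, clamp_mem neg_pi_le _⟩)
    refine h3.congr (fun t ht => ?_) ?_
    · simp only [clD, clamp_eq ht, Function.comp]
    · simp only [clD, clamp_eq hη, Function.comp]
  have dφ : ∀ φ ∈ Icc (-(π / 2)) (π / 2), ∀ η ψ, HasDerivWithinAt (fun t => f (clD L (η, t, ψ)))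
      (fderivWithin ℝ f (milneDomain L) (clD L (η, φ, ψ)) (0, 1, 0))
      (Icc (-(π / 2)) (π / 2)) φ := by
    intro φ hφ η ψ
    have hcv : HasDerivWithinAt (fun t : ℝ => (clamp 0 L η, t, clamp (-π) π ψ))
        (0, 1, 0) (Icc (-(π / 2)) (π / 2)) φ :=
      ((hasDerivAt_const φ _).prodMk ((hasDerivAt_id φ).prodMk
        (hasDerivAt_const φ _))).hasDerivWithinAt
    have hpt : clD L (η, φ, ψ) = (clamp 0 L η, φ, clamp (-π) π ψ) := by
      simp only [clD, clamp_eq hφ]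
    have := hfd (η, φ, ψ)
    rw [hpt] at this ⊢
    have h3 := this.comp_hasDerivWithinAt φ hcv
      (t := milneDomain L)
      (fun t ht => ⟨clamp_mem hL0.le _, ht, clamp_mem neg_pi_le _⟩)
    refine h3.congr (fun t ht => ?_) ?_
    · simp only [clD, clamp_eq ht, Function.comp]
    · simp only [clD, clamp_eq hφ, Function.comp]
  have hEf : ∀ η ∈ Icc 0 L, E (fun φ ψ => f (clD L (η, φ, ψ))) = angAvg f η := by
    intro η hη
    have : angAvg f η = E (fun φ ψ => f (η, φ, ψ)) := rfl
    rw [this]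
    apply E_congr
    intro φ hφ ψ hψ
    rw [clD_eq ⟨hη, hφ, hψ⟩]
  have hEg : ∀ η, E (fun φ ψ => f (clD L (η, φ, ψ)) - a)
      = E (fun φ ψ => f (clD L (η, φ, ψ))) - a := by
    intro η
    have c1 : Continuous fun q : ℝ × ℝ => f (clD L (η, q.1, q.2)) :=
      cf.comp (by fun_prop : Continuous fun q : ℝ × ℝ => (η, q.1, q.2))
    rw [E_sub c1 continuous_const, E_const]
  have hcF : ∀ η, Continuous (force R₁ R₂ ε η) := by
    intro η
    unfold force
    fun_prop
  refine ⟨hL1, ?_, ?_, ?_, ?_, hcF, ?_, ?_, ?_, ?_, ?_⟩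
  · exact cf.sub continuous_const
  · exact cfη
  · exact cfφ
  · exact cS
  · exact fun η hη φ ψ => (dη η hη φ ψ).sub_const a
  · exact fun φ hφ η ψ => (dφ φ hφ η ψ).sub_const a
  · have hforce : ContinuousOn (fun p : ℝ × ℝ × ℝ => force R₁ R₂ ε p.1 p.2.2) (milneDomain L) := by
      unfold force
      have hne : ∀ R, Rm ≤ R → ∀ p ∈ milneDomain L, R - ε * p.1 ≠ 0 := by
        intro R hR p hp
        have : ε * p.1 ≤ ε * L := mul_le_mul_of_nonneg_left hp.1.2 hε.le
        have : 0 < R - ε * p.1 := by linarith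
        exact this.ne'
      apply ContinuousOn.mul continuousOn_const
      apply ContinuousOn.add
      · exact ContinuousOn.div (by fun_prop) (by fun_prop) (hne R₁ h1)
      · exact ContinuousOn.div (by fun_prop) (by fun_prop) (hne R₂ h2)
    have cE : Continuous fun p : ℝ × ℝ × ℝ => E (fun φ ψ => f (clD L (p.1, φ, ψ))) :=
      (cont_E (u := fun t φ ψ => f (clD L (t, φ, ψ))) cf).comp continuous_fst
    have hEq : EqOn (fun p : ℝ × ℝ × ℝ =>
        Real.sin p.2.1 * fderivWithin ℝ f (milneDomain L) (clD L p) (1, 0, 0)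
        + force R₁ R₂ ε p.1 p.2.2 * Real.cos p.2.1
          * fderivWithin ℝ f (milneDomain L) (clD L p) (0, 1, 0)
        + f (clD L p) - E (fun φ ψ => f (clD L (p.1, φ, ψ)))) (fun p => S (clD L p))
        (interior (milneDomain L)) := by
      intro p hp
      have hpD := interior_subset hp
      have e := heqn p hp
      rw [interior_D] at hp
      obtain ⟨q1, q2, q3⟩ := hp
      have e1 : dEta f p = fderivWithin ℝ f (milneDomain L) (clD L p) (1, 0, 0) := by
        have := (dη p.1 hpD.1 p.2.1 p.2.2).hasDerivAt (Icc_mem_nhds q1.1 q1.2)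
        refine (HasDerivAt.congr_of_eventuallyEq this ?_).deriv
        filter_upwards [Icc_mem_nhds q1.1 q1.2] with t ht
        rw [clD_eq (p := (t, p.2.1, p.2.2)) ⟨ht, hpD.2.1, hpD.2.2⟩]
      have e2 : dPhi f p = fderivWithin ℝ f (milneDomain L) (clD L p) (0, 1, 0) := by
        have := (dφ p.2.1 hpD.2.1 p.1 p.2.2).hasDerivAt (Icc_mem_nhds q2.1 q2.2)
        refine (HasDerivAt.congr_of_eventuallyEq this ?_).deriv
        filter_upwards [Icc_mem_nhds q2.1 q2.2] with t ht
        rw [clD_eq (p := (p.1, t, p.2.2)) ⟨hpD.1, ht, hpD.2.2⟩]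
      simp only
      rw [hEf p.1 hpD.1, ← e1, ← e2, clD_eq hpD]
      exact e
    have hEq2 := hEq.of_subset_closure (t := milneDomain L)
      (((((Real.continuous_sin.comp (continuous_fst.comp continuous_snd)).mul cfη).continuousOn.add
        ((hforce.mul (Real.continuous_cos.comp
          (continuous_fst.comp continuous_snd)).continuousOn).mul cfφ.continuousOn)).add
        cf.continuousOn).sub cE.continuousOn) cS.continuousOn
      interior_subset (closure_interior_D hL0).ge
    intro η hη φ hφ ψ hψ
    have := hEq2 (show (η, φ, ψ) ∈ milneDomain L from ⟨hη, hφ, hψ⟩)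
    simp only at this ⊢
    rw [hEg]
    linarith
  · intro φ hφ ψ hψ
    have hφ' : -φ ∈ Icc (-(π / 2)) (π / 2) := ⟨by linarith [hφ.2], by linarith [hφ.1]⟩
    have hLm : L ∈ Icc 0 L := ⟨hL0.le, le_rfl⟩
    rw [clD_eq ⟨hLm, hφ, hψ⟩, clD_eq ⟨hLm, hφ', hψ⟩, hrefl φ ψ]
  · have hLm : L ∈ Icc 0 L := ⟨hL0.le, le_rfl⟩
    have c1 : Continuous fun q : ℝ × ℝ => f (clD L (L, q.1, q.2)) :=
      cf.comp (by fun_prop : Continuous fun q : ℝ × ℝ => (L, q.1, q.2))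
    have e1 : E (fun φ ψ => Real.sin φ ^ 2 * (f (clD L (L, φ, ψ)) - a))
        = E (fun φ ψ => Real.sin φ ^ 2 * f (clD L (L, φ, ψ)) - a * Real.sin φ ^ 2) := by
      apply E_congr
      intro φ _ ψ _
      ring
    have e2 : a = 3 * E (fun φ ψ => Real.sin φ ^ 2 * f (clD L (L, φ, ψ))) := by
      have : E (fun φ ψ => Real.sin φ ^ 2 * f (clD L (L, φ, ψ)))
          = E (fun φ ψ => f (L, φ, ψ) * Real.sin φ ^ 2) := by
        apply E_congr
        intro φ hφ ψ hψ
        rw [clD_eq ⟨hLm, hφ, hψ⟩, mul_comm]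
      rw [this, ha]
      unfold limitValue E
      ring
    rw [e1, E_sub (((Real.continuous_sin.comp continuous_fst).pow 2).mul c1) (by fun_prop),
      E_const_mul, E_sin2]
    linarith

lemma int_exp_le {b c L : ℝ} (hb : 0 < b) (hc : 0 ≤ c) :
    ∫ η in (0 : ℝ)..L, c * Real.exp (-b * η) ≤ c / b := by
  rw [intervalIntegral.integral_eq_sub_of_hasDerivAt
    (f := fun t => - (c / b * Real.exp (-b * t)))]
  · have : 0 ≤ c / b * Real.exp (-b * L) := by positivity
    simp only [mul_zero, Real.exp_zero]
    linarith
  · intro x _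
    refine ((((hasDerivAt_id x).const_mul (-b)).exp).const_mul (c / b)).neg.congr_deriv ?_
    have hb' := hb.ne'
    simp only [id]
    field_simp
  · exact Continuous.intervalIntegrable (by fun_prop) _ _

lemma norms_bound {L b B a : ℝ} (hL : 0 ≤ L) (hb : 0 < b) (hB : 0 ≤ B) {f : ℝ × ℝ × ℝ → ℝ}
    (hf : ContinuousOn f (milneDomain L))
    (h : ∀ p ∈ milneDomain L, |f p - a| ≤ B * Real.exp (-b * p.1)) :
    l2Norm L (fun p => Real.exp (b / 2 * p.1) * (f p - a))
      + linfNorm L (fun p => Real.exp (b / 2 * p.1) * (f p - a))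
      ≤ Real.sqrt (4 * π * B ^ 2 / b) + B := by
  have hp := Real.pi_pos
  have hexp : ∀ t, Real.exp (b / 2 * t) * Real.exp (b / 2 * t) * Real.exp (-b * t) = 1 := by
    intro t
    rw [← Real.exp_add, ← Real.exp_add, ← Real.exp_zero]
    congr 1
    ring
  apply add_le_add
  · unfold l2Norm
    apply Real.sqrt_le_sqrt
    set v : ℝ → ℝ → ℝ → ℝ := fun t φ ψ =>
      (Real.exp (b / 2 * (clD L (t, φ, ψ)).1) * (f (clD L (t, φ, ψ)) - a)) ^ 2 with hv
    have cv : Continuous fun q : ℝ × ℝ × ℝ => v q.1 q.2.1 q.2.2 := by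
      have h1 : Continuous fun q : ℝ × ℝ × ℝ => f (clD L (q.1, q.2.1, q.2.2)) := cont_clD hL hf
      have h2 : Continuous fun q : ℝ × ℝ × ℝ => (clD L (q.1, q.2.1, q.2.2)).1 :=
        continuous_fst.comp (continuous_clD L)
      exact ((Real.continuous_exp.comp (continuous_const.mul h2)).mul
        (h1.sub continuous_const)).pow 2
    have e : ∫ η in (0 : ℝ)..L, ∫ ψ in (-π)..π, ∫ φ in (-(π / 2))..(π / 2),
        (Real.exp (b / 2 * η) * (f (η, φ, ψ) - a)) ^ 2 * Real.cos φ
        = ∫ η in (0 : ℝ)..L, 4 * π * E (v η) := by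
      apply intervalIntegral.integral_congr
      intro η hη
      rw [uIcc_of_le hL] at hη
      have : E (v η) = E (fun φ ψ => (Real.exp (b / 2 * η) * (f (η, φ, ψ) - a)) ^ 2) := by
        apply E_congr
        intro φ hφ ψ hψ
        simp only [hv]
        rw [clD_eq ⟨hη, hφ, hψ⟩]
      simp only
      rw [this]
      unfold E
      field_simp
    simp only
    rw [e]
    refine le_trans ?_ (int_exp_le (L := L) (c := 4 * π * B ^ 2) hb (by positivity))
    apply intervalIntegral.integral_mono_on hL
      (Continuous.intervalIntegrable (continuous_const.mul (cont_E cv)) _ _)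
      (Continuous.intervalIntegrable (by fun_prop) _ _)
    intro η hη
    have : E (v η) ≤ B ^ 2 * Real.exp (-b * η) := by
      rw [← E_const (B ^ 2 * Real.exp (-b * η))]
      apply E_mono (cont2 cv η) continuous_const
      intro φ hφ ψ hψ
      simp only [hv]
      rw [clD_eq ⟨hη, hφ, hψ⟩, mul_pow]
      have h1 := h (η, φ, ψ) ⟨hη, hφ, hψ⟩
      have h2 : (f (η, φ, ψ) - a) ^ 2 ≤ (B * Real.exp (-b * η)) ^ 2 := by
        rw [← sq_abs]
        exact pow_le_pow_left₀ (abs_nonneg _) h1 2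
      calc _ ≤ Real.exp (b / 2 * η) ^ 2 * (B * Real.exp (-b * η)) ^ 2 :=
            mul_le_mul_of_nonneg_left h2 (sq_nonneg _)
        _ = B ^ 2 * Real.exp (-b * η) *
            (Real.exp (b / 2 * η) * Real.exp (b / 2 * η) * Real.exp (-b * η)) := by ring
        _ = _ := by rw [hexp, mul_one]
    have h4 : (0 : ℝ) ≤ 4 * π := by positivity
    change 4 * π * E (v η) ≤ 4 * π * B ^ 2 * Real.exp (-b * η)
    rw [mul_assoc (4 * π) (B ^ 2)]
    exact mul_le_mul_of_nonneg_left this h4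
  · unfold linfNorm
    refine Real.iSup_le (fun p => Real.iSup_le (fun hpD => ?_) hB) hB
    rw [abs_mul, abs_of_pos (Real.exp_pos _)]
    have h0 : 0 ≤ p.1 := hpD.1.1
    calc _ ≤ Real.exp (b / 2 * p.1) * (B * Real.exp (-b * p.1)) :=
          mul_le_mul_of_nonneg_left (h p hpD) (Real.exp_pos _).le
      _ = B * Real.exp (- (b / 2 * p.1)) := by
          rw [mul_left_comm, ← Real.exp_add]
          congr 2
          ring
      _ ≤ B * 1 := by
          apply mul_le_mul_of_nonneg_left _ hB
          rw [Real.exp_le_one_iff]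
          have : 0 ≤ b / 2 * p.1 := by positivity
          linarith
      _ = B := mul_one B

/-- Theorem "Milne theorem 2": exponential spatial decay. -/
theorem milne_exponential_decay (R₁ R₂ n K M : ℝ) (hR₁ : 0 < R₁) (hR₂ : 0 < R₂)
    (hn : n ∈ Ioo (0 : ℝ) (1 / 2)) (hK : 0 < K) (hM : 0 < M) :
    ∃ ε₀ ∈ Ioo (0 : ℝ) 1, ∃ K₀ ∈ Ioc (0 : ℝ) K, ∃ C > (0 : ℝ),
      ∀ ε ∈ Ioc (0 : ℝ) ε₀, ∀ h : ℝ → ℝ → ℝ, ∀ S f : ℝ × ℝ × ℝ → ℝ,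
        DataBounds K M (layerL ε n) h S → IsMilneSolution R₁ R₂ ε n h S f →
        l2Norm (layerL ε n)
            (fun p => Real.exp (K₀ * p.1) * (f p - limitValue (layerL ε n) f))
          + linfNorm (layerL ε n)
              (fun p => Real.exp (K₀ * p.1) * (f p - limitValue (layerL ε n) f)) ≤ C := by
  obtain ⟨hn0, hn1⟩ := hn
  set Rm := min R₁ R₂ with hRmdef
  have hRm : 0 < Rm := lt_min hR₁ hR₂
  set b := min (1 / 20) K with hbdef
  have hb : 0 < b := lt_min (by norm_num) hK
  have hb1 : b ≤ 1 / 20 := min_le_left _ _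
  have hbK : b ≤ K := min_le_right _ _
  set W := 2 / Rm * (2 / b ^ 2 + 2 / b) with hW
  have hWpos : 0 < W := by positivity
  set B := 2000 * (1 / b ^ 2 + 1 / b + 1) * M with hB
  have hBpos : 0 < B := by positivity
  refine ⟨min (1 / 2) (min ((Rm / 2) ^ 2) (1 / (640 * W))), ⟨by positivity, ?_⟩, b / 2,
    ⟨by positivity, by linarith⟩, Real.sqrt (4 * π * B ^ 2 / b) + B, by positivity, ?_⟩
  · exact lt_of_le_of_lt (min_le_left _ _) (by norm_num)
  intro ε hε h S f hD hf
  obtain ⟨hε0, hεle⟩ := hε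
  have hε1 : ε ≤ 1 / 2 := hεle.trans (min_le_left _ _)
  have hε2 : ε ≤ (Rm / 2) ^ 2 := hεle.trans ((min_le_right _ _).trans (min_le_left _ _))
  have hε3 : ε ≤ 1 / (640 * W) := hεle.trans ((min_le_right _ _).trans (min_le_right _ _))
  have hL1 : 1 ≤ layerL ε n :=
    Real.one_le_rpow_of_pos_of_le_one_of_nonpos hε0 (by linarith) (by linarith)
  have hL0 : 0 < layerL ε n := by linarith
  have hεL : ε * layerL ε n ≤ Rm / 2 := by
    have e : ε * layerL ε n = ε ^ (1 - n) := by
      unfold layerL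
      rw [sub_eq_add_neg, Real.rpow_add hε0, Real.rpow_one]
    rw [e]
    calc ε ^ (1 - n) ≤ ε ^ (1 / 2 : ℝ) :=
          Real.rpow_le_rpow_of_exponent_ge hε0 (by linarith) (by linarith)
      _ = Real.sqrt ε := (Real.sqrt_eq_rpow ε).symm
      _ ≤ Rm / 2 := Real.sqrt_le_iff.2 ⟨by positivity, hε2⟩
  have hcore := core_of_solution hRm (min_le_left _ _) (min_le_right _ _) hε0 hL1 hεL hD hf
  have hmain := hcore.main (b := b) (M := M) (τ := ε * (2 / Rm)) hb hb1 hM.le (by positivity)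
    (by
      have : ε * (640 * W) ≤ 1 := (le_div_iff₀ (by positivity)).1 hε3
      have e : ε * (2 / Rm) * (2 / b ^ 2 + 2 / b) = ε * W := by rw [hW]; ring
      rw [e]
      linarith)
    (fun η hη ψ => force_bound hRm (min_le_left _ _) (min_le_right _ _) hε0 hεL hη ψ)
    (by
      intro η hη φ hφ ψ hψ
      rw [clD_eq ⟨hη, hφ, hψ⟩]
      have h1 := hD.sBound (η, φ, ψ) ⟨hη, hφ, hψ⟩
      have h2 : Real.exp (K * η) * |S (η, φ, ψ)| ≤ M := by
        refine le_trans (mul_le_mul_of_nonneg_left ?_ (Real.exp_pos _).le) h1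
        have := abs_nonneg (dEta S (η, φ, ψ))
        have := abs_nonneg (dPhi S (η, φ, ψ))
        have := abs_nonneg (dPsi S (η, φ, ψ))
        linarith
      have h3 : Real.exp (b * η) ≤ Real.exp (K * η) :=
        Real.exp_le_exp.2 (mul_le_mul_of_nonneg_right hbK hη.1)
      have h4 : Real.exp (b * η) * |S (η, φ, ψ)| ≤ M :=
        (mul_le_mul_of_nonneg_right h3 (abs_nonneg _)).trans h2
      rw [neg_mul, Real.exp_neg, ← div_eq_mul_inv, le_div_iff₀ (Real.exp_pos _), mul_comm]
      exact h4)
    (a := limitValue (layerL ε n) f)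
    (by
      intro φ hφ ψ hψ
      have hp := Real.pi_pos
      have hφ' : φ ∈ Icc (-(π / 2)) (π / 2) := ⟨by linarith [hφ.1], hφ.2⟩
      have h00 : (0 : ℝ) ∈ Icc 0 (layerL ε n) := ⟨le_rfl, hL0.le⟩
      rw [clD_eq ⟨h00, hφ', hψ⟩, sub_add_cancel]
      have hq : (φ, ψ) ∈ inflowSet :=
        ⟨Real.sin_pos_of_pos_of_lt_pi hφ.1 (by linarith [hφ.2]), hφ', hψ⟩
      have h1 := hf.inflow (φ, ψ) hq
      have h2 := hD.hBound (φ, ψ) hq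
      simp only at h1 h2
      rw [h1]
      have := abs_nonneg (deriv (fun t => h t ψ) φ)
      have := abs_nonneg (deriv (fun t => h φ t) ψ)
      linarith)
  refine norms_bound hL0.le hb hBpos.le hf.smooth.continuousOn ?_
  intro p hpD
  have := hmain p.1 hpD.1 p.2.1 hpD.2.1 p.2.2 hpD.2.2
  rw [clD_eq (L := layerL ε n) (p := (p.1, p.2.1, p.2.2)) hpD] at this
  exact this

end MilneStmt
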